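/- Main theorem (triviality of isotropy for combined theories): let 𝕋₁, 𝕋₂ be equational theories over disjoint signatures Σ₁, Σ₂ such that each 𝕋ᵢ contains at least one function symbol of positive arity that is neither constant nor a projection in 𝕋ᵢ. Then for every n ≥ 0, the logical isotropy group G_{𝕋₁+𝕋₂}(Mₙ) of the free model Mₙ of 𝕋₁ + 𝕋₂ on n generators is trivial: G_{𝕋₁+𝕋₂}(Mₙ) = {[x]}. -/

import Mathlib

/-- First-order terms over symbols `S` with arity `ar` and variables `V`. -/
inductive Tm (S : Type) (ar : S → ℕ) (V : Type) : Type
  | var : V → Tm S ar V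
  | app : (f : S) → (Fin (ar f) → Tm S ar V) → Tm S ar V

namespace Tm
variable {S : Type} {ar : S → ℕ} {V W : Type}

def mapVar (g : V → W) : Tm S ar V → Tm S ar W
  | var v => var (g v)
  | app f ts => app f (fun i => (ts i).mapVar g)

def bind : Tm S ar V → (V → Tm S ar W) → Tm S ar W
  | var v, g => g v
  | app f ts, g => app f (fun i => (ts i).bind g)

/-- All variables of a term belong to a given set. -/
def VarsIn : Tm S ar V → Set V → Prop
  | var v, A => v ∈ A
  | app _ ts, A => ∀ i, VarsIn (ts i) A

/-- The term contains at least one variable. -/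
def HasVar : Tm S ar V → Prop
  | var _ => True
  | app _ ts => ∃ i, HasVar (ts i)

end Tm

/-- The combined signature: operation symbols of the two theories (`op`),
generator constants `y₁,…,yₙ` (`gen`), and indeterminate constants `x = ind 0`,
`xᵢ = ind i` (`ind`). -/
inductive CSym (F : Bool → Type) (n : ℕ) : Type
  | op : (b : Bool) → F b → CSym F n
  | gen : Fin n → CSym F n
  | ind : ℕ → CSym F n

namespace CSym
variable {F : Bool → Type} {n : ℕ}

def arity (arF : ∀ b, F b → ℕ) : CSym F n → ℕ
  | op b f => arF b f
  | gen _ => 0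
  | ind _ => 0

/-- Which of the four component signatures a symbol belongs to:
`0 = Σ₁`, `1 = Σ₂`, `2 = Σ₃`, `3 = Σ₄`. -/
def sig : CSym F n → Fin 4
  | op false _ => 0
  | op true _ => 1
  | gen _ => 2
  | ind _ => 3

end CSym
section Setup

variable (F : Bool → Type) (arF : ∀ b, F b → ℕ) (n : ℕ)

/-- Closed terms over the combined signature `Σ = Σ₁ ∪ Σ₂ ∪ Σ₃ ∪ Σ₄`. -/
abbrev CT := Tm (CSym F n) (CSym.arity arF) Empty

/-- The root symbol of a closed term. -/
def rootSym : CT F arF n → CSym F n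
  | .var v => v.elim
  | .app f _ => f

/-- All symbols of the closed term satisfy the predicate `P`. -/
def InSig (P : CSym F n → Prop) : CT F arF n → Prop
  | .var v => v.elim
  | .app f ts => P f ∧ ∀ i, InSig P (ts i)

/-- A closed term is pure if all of its symbols belong to a single one of the
four component signatures. -/
def IsPure (t : CT F arF n) : Prop := ∃ k : Fin 4, InSig F arF n (fun s => s.sig = k) t

/-- The rank of a closed term: `0` if pure, and otherwise `1` plus the maximal
rank of its alien subterms. -/
def rank : CT F arF n → ℕ
  | .var v => v.elim
  | .app f ts =>
      Finset.univ.sup fun i =>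
        rank (ts i) + (if (rootSym F arF n (ts i)).sig = f.sig then 0 else 1)

/-- The maximal subterms of `t` whose root is outside signature `k`. -/
def aliensUnder (k : Fin 4) : CT F arF n → Set (CT F arF n)
  | .var v => v.elim
  | .app f ts =>
      if f.sig = k then ⋃ i, aliensUnder k (ts i) else {Tm.app f ts}

/-- The alien subterms of a closed term (relative to the signature of its root). -/
def aliensSet : CT F arF n → Set (CT F arF n)
  | .var v => v.elim
  | .app f ts => ⋃ i, aliensUnder F arF n f.sig (ts i)

/-- All alien subterms at arbitrary depth. -/
def allAliensSet : CT F arF n → Set (CT F arF n)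
  | .var v => v.elim
  | .app f ts =>
      ⋃ i, (if (rootSym F arF n (ts i)).sig = f.sig then (∅ : Set _) else {ts i}) ∪
        allAliensSet (ts i)

/-- View a closed combined term through the layer of theory `b`: keep the
top part built from `Σ_b`-symbols and regard the maximal non-`Σ_b`-rooted
subterms as opaque constants. -/
def layerize (b : Bool) : CT F arF n → Tm (F b) (arF b) (CT F arF n)
  | .app (.op b' f) ts =>
      if h : b' = b then h ▸ (Tm.app f (fun i => layerize b' (ts i)))
      else Tm.var (Tm.app (.op b' f) ts)
  | t => Tm.var t

end Setup
section Setup2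

variable (F : Bool → Type) (arF : ∀ b, F b → ℕ) (n : ℕ)
variable (Ax : ∀ b, Set (Tm (F b) (arF b) ℕ × Tm (F b) (arF b) ℕ))

mutual
/-- The isomorphism relation `≅` on closed combined terms, defined together
with the layer congruences: two terms are isomorphic iff their roots lie in the
same component signature and their alien abstractions are congruent modulo the
corresponding theory (for the constant signatures `Σ₃, Σ₄` this is syntactic
equality). -/
inductive Iso : CT F arF n → CT F arF n → Prop where
  | opEq (b : Bool) (u v : CT F arF n) :
      (∃ g : F b, rootSym F arF n u = .op b g) →
      (∃ g : F b, rootSym F arF n v = .op b g) →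
      LEq b (layerize F arF n b u) (layerize F arF n b v) → Iso u v
  | constEq (t : CT F arF n) :
      ((rootSym F arF n t).sig = 2 ∨ (rootSym F arF n t).sig = 3) → Iso t t

/-- The congruence `≈_b` on `Σ_b`-terms whose constants are closed combined
terms (representing their `≅`-classes): generated by the substitution instances
of the axioms of `𝕋_b` together with the identification of `≅`-related
constants. -/
inductive LEq : (b : Bool) →
    Tm (F b) (arF b) (CT F arF n) → Tm (F b) (arF b) (CT F arF n) → Prop where
  | refl (b) (t) : LEq b t t
  | symm {b s t} : LEq b s t → LEq b t s
  | trans {b s t u} : LEq b s t → LEq b t u → LEq b s u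
  | congr (b) (g : F b) (ts us : Fin (arF b g) → Tm (F b) (arF b) (CT F arF n)) :
      (∀ i, LEq b (ts i) (us i)) → LEq b (.app g ts) (.app g us)
  | varRel (b) (s t : CT F arF n) : Iso s t → LEq b (.var s) (.var t)
  | ax (b) (u v : Tm (F b) (arF b) ℕ) : (u, v) ∈ Ax b →
      ∀ σ : ℕ → Tm (F b) (arF b) (CT F arF n), LEq b (u.bind σ) (v.bind σ)
end

end Setup2
section Setup3

variable (F : Bool → Type) (arF : ∀ b, F b → ℕ) (n : ℕ)
variable (Ax : ∀ b, Set (Tm (F b) (arF b) ℕ × Tm (F b) (arF b) ℕ))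

/-- The combined algebra `𝒜 = Term^c(Σ)/≅`. -/
abbrev Alg := Quot (Iso F arF n Ax)

/-- Provable equality in the theory `𝕋_b` on terms with variables (equivalently
the smallest `Σ_b`-congruence containing all substitution instances of the
axioms of `𝕋_b`); with `V := Alg` this is the congruence `≈_b` on
`Term^c(Σ_b, Term^c(Σ)/≅)`. -/
inductive AxCong (b : Bool) {V : Type} : Tm (F b) (arF b) V → Tm (F b) (arF b) V → Prop where
  | refl (t) : AxCong b t t
  | symm {s t} : AxCong b s t → AxCong b t s
  | trans {s t u} : AxCong b s t → AxCong b t u → AxCong b s u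
  | congr (g : F b) (ts us : Fin (arF b g) → Tm (F b) (arF b) V) :
      (∀ i, AxCong b (ts i) (us i)) → AxCong b (.app g ts) (.app g us)
  | ax (u v : Tm (F b) (arF b) ℕ) : (u, v) ∈ Ax b →
      ∀ σ : ℕ → Tm (F b) (arF b) V, AxCong b (u.bind σ) (v.bind σ)

/-- Abstraction of alien subterms: `[t]ᵇ_≅ ∈ Term^c(Σ_b, Term^c(Σ)/≅)`. -/
def absQ (b : Bool) (t : CT F arF n) : Tm (F b) (arF b) (Alg F arF n Ax) :=
  (layerize F arF n b t).mapVar (Quot.mk _)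

attribute [local instance] Classical.propDecidable

/-- The interpretation `t^𝒜` of a closed combined term in the combined algebra:
a term collapses to (the class of) an alien subterm whose class its alien
abstraction is `≈_b`-congruent to, and is interpreted by its own class
otherwise. -/
noncomputable def interp : CT F arF n → Alg F arF n Ax
  | .app (.op b g) ts =>
      let t' : CT F arF n := .app (.op b g) (fun i => (interp (ts i)).out)
      if h : ∃ u, u ∈ aliensSet F arF n t' ∧
          AxCong F arF Ax b (absQ F arF n Ax b t') (.var (Quot.mk _ u))
      then Quot.mk _ h.choose
      else Quot.mk _ t'
  | t => Quot.mk _ t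

end Setup3
section Setup4

variable (F : Bool → Type) (arF : ∀ b, F b → ℕ) (n : ℕ)
variable (Ax : ∀ b, Set (Tm (F b) (arF b) ℕ × Tm (F b) (arF b) ℕ))

/-- Substitution of a closed term `w` for the indeterminate constant `x_j` in a
closed combined term. -/
def substInd (j : ℕ) (w : CT F arF n) : CT F arF n → CT F arF n
  | .var v => v.elim
  | .app (.ind j') ts => if j' = j then w else .app (.ind j') ts
  | .app f ts => .app f (fun i => substInd j w (ts i))

/-- The indeterminate constant `x_i` as a closed term (`x = xTm 0`). -/
def xTm (i : ℕ) : CT F arF n := .app (.ind i) Fin.elim0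

/-- Replace every indeterminate constant occurring in a term by `x`. -/
def indToX : CT F arF n → CT F arF n
  | .var v => v.elim
  | .app (.ind _) _ => xTm F arF n 0
  | .app f ts => .app f (fun i => indToX (ts i))

/-- Embedding of `Σ_b`-terms into combined terms. -/
def embedOp (b : Bool) {V : Type} : Tm (F b) (arF b) V → Tm (CSym F n) (CSym.arity arF) V
  | .var v => .var v
  | .app g ts => .app (.op b g) (fun i => embedOp b (ts i))

/-- Provable equality for the (combination of the) theories `𝕋_b` (`b ∈ B`) on
closed terms over the sub-signature of symbols satisfying `P`: the smallest
congruence on that set of closed terms containing all substitution instances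
(by closed terms over the sub-signature) of the axioms. -/
inductive PE (B : Set Bool) (P : CSym F n → Prop) : CT F arF n → CT F arF n → Prop where
  | refl (t) : InSig F arF n P t → PE B P t t
  | symm {s t} : PE B P s t → PE B P t s
  | trans {s t u} : PE B P s t → PE B P t u → PE B P s u
  | congr (f : CSym F n) (ts us : Fin (CSym.arity arF f) → CT F arF n) : P f →
      (∀ i, PE B P (ts i) (us i)) → PE B P (.app f ts) (.app f us)
  | ax (b : Bool) (hb : b ∈ B) (u v : Tm (F b) (arF b) ℕ) (h : (u, v) ∈ Ax b)
      (σ : ℕ → CT F arF n) : (∀ m, InSig F arF n P (σ m)) →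
      PE B P ((embedOp F arF n b u).bind σ) ((embedOp F arF n b v).bind σ)

/-- The sub-signature consisting of the operations of the theories in `B`, all
generator constants `y₁,…,yₙ`, and the indeterminates `x_j` with `j ∈ J`. -/
def SigP (B : Set Bool) (J : Set ℕ) : CSym F n → Prop
  | .op b _ => b ∈ B
  | .gen _ => True
  | .ind j => j ∈ J

/-- The (combination of the) theories in `B` is non-trivial: it does not prove
the equation `x = y` for distinct variables (equivalently, it does not identify
two distinct indeterminate constants). -/
def Nontriv (B : Set Bool) : Prop :=
  ¬ PE F arF n Ax B (SigP F n B Set.univ) (xTm F arF n 1) (xTm F arF n 2)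

/-- Membership of (the class of) `t` in the logical isotropy group of the free
model on `n` generators of the combination of the theories in `B`: `t` is a
closed term over the signature extended by the constant `x` that is invertible
under substitution into `x` and commutes generically with every operation. -/
def GIso (B : Set Bool) (t : CT F arF n) : Prop :=
  InSig F arF n (SigP F n B {0}) t ∧
  (∃ tinv, InSig F arF n (SigP F n B {0}) tinv ∧
    PE F arF n Ax B (SigP F n B {0}) (substInd F arF n 0 tinv t) (xTm F arF n 0) ∧
    PE F arF n Ax B (SigP F n B {0}) (substInd F arF n 0 t tinv) (xTm F arF n 0)) ∧
  ∀ b, b ∈ B → ∀ g : F b,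
    PE F arF n Ax B (SigP F n B {j | 1 ≤ j ∧ j ≤ arF b g})
      (substInd F arF n 0 (.app (.op b g) (fun i => xTm F arF n (i.val + 1))) t)
      (.app (.op b g) (fun i => substInd F arF n 0 (xTm F arF n (i.val + 1)) t))

/-- `g` is a projection in `𝕋_b`. -/
def IsProj (b : Bool) (g : F b) : Prop :=
  ∃ i : Fin (arF b g),
    AxCong F arF Ax b (V := ℕ) (.app g (fun j => .var j.val)) (.var i.val)

/-- `g` is constant in `𝕋_b`: `𝕋_b` proves `g(y₁,…,y_m) = s` for pairwise
distinct variables none of which occurs in `s`. -/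
def IsConst (b : Bool) (g : F b) : Prop :=
  ∃ s : Tm (F b) (arF b) ℕ, s.VarsIn {m | arF b g ≤ m} ∧
    AxCong F arF Ax b (V := ℕ) (.app g (fun j => .var j.val)) s

end Setup4
section Models

variable (F : Bool → Type) (arF : ∀ b, F b → ℕ) (n : ℕ)
variable (Ax : ∀ b, Set (Tm (F b) (arF b) ℕ × Tm (F b) (arF b) ℕ))

/-- Evaluation of a `Σ_b`-term in a set equipped with operations. -/
def evalTm {α : Type} (ops : ∀ b (g : F b), (Fin (arF b g) → α) → α)
    (b : Bool) {V : Type} (ρ : V → α) : Tm (F b) (arF b) V → α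
  | .var v => ρ v
  | .app g ts => ops b g (fun i => evalTm ops b ρ (ts i))

/-- A (set-based) model of the combined theory `𝕋₁ + 𝕋₂`. -/
structure TModel where
  carrier : Type
  ops : ∀ b (g : F b), (Fin (arF b g) → carrier) → carrier
  sat : ∀ b u v, (u, v) ∈ Ax b → ∀ ρ : ℕ → carrier,
      evalTm F arF ops b ρ u = evalTm F arF ops b ρ v

/-- Homomorphisms of models. -/
@[ext]
structure TModelHom (M N : TModel F arF Ax) where
  toFun : M.carrier → N.carrier
  map_ops : ∀ b (g : F b) (args : Fin (arF b g) → M.carrier),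
      toFun (M.ops b g args) = N.ops b g (fun i => toFun (args i))

/-- The identity homomorphism. -/
def TModelHom.id (M : TModel F arF Ax) : TModelHom F arF Ax M M :=
  ⟨fun a => a, fun _ _ _ => rfl⟩

/-- Composition of homomorphisms. -/
def TModelHom.comp {M M' M'' : TModel F arF Ax} (h' : TModelHom F arF Ax M' M'')
    (h : TModelHom F arF Ax M M') : TModelHom F arF Ax M M'' :=
  ⟨fun a => h'.toFun (h.toFun a), fun b g args => by
    simp [h.map_ops, h'.map_ops]⟩

/-- `M` together with the `n` elements `gens` is a free model on `n`
generators: the universal property. -/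
def IsFreeOn (M : TModel F arF Ax) (gens : Fin n → M.carrier) : Prop :=
  ∀ (N : TModel F arF Ax) (a : Fin n → N.carrier),
    ∃! h : TModelHom F arF Ax M N, ∀ i, h.toFun (gens i) = a i

end Models

/-!
Provable equality in `𝕋₁ + 𝕋₂` is decided in a *layered model*: a set whose elements are the
constants, elements with root in `𝕋₁`, and elements with root in `𝕋₂`, and whose reduct to each
`𝕋_b` is free on the elements without root in `𝕋_b`. Such models exist by a cardinality argument,
because a symbol that is neither constant nor a projection produces as many non-generators of a
large free algebra as there are generators.

The number of alternating layers of an element is its height. Let `t` be in the isotropy group,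
of height `k + 1` and with root in `𝕋_b`, and take a symbol `g` of the other theory. The elements
`t(x₁), …, t(x_m)` are distinct, of height at least `k + 1`, and have root in `𝕋_b`, so
`g(t(x₁), …, t(x_m))` has height at least `k + 2` and root in the other theory. On the other hand
`t(g(x₁, …, x_m))` is a `𝕋_b`-layer over elements of height at most `k + 1`. So `t` does not
commute with `g`; hence `t` is a constant, and invertibility makes it `x`.
-/

open Cardinal Function

namespace Tm
variable {S : Type} {ar : S → ℕ} {U V W : Type}

theorem bind_assoc (t : Tm S ar U) (σ : U → Tm S ar V) (τ : V → Tm S ar W) :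
    (t.bind σ).bind τ = t.bind fun u => (σ u).bind τ := by
  induction t with
  | var v => rfl
  | app f ts ih => simp only [bind, ih]

theorem bind_var (t : Tm S ar V) : t.bind var = t := by
  induction t with
  | var v => rfl
  | app f ts ih => simp only [bind, ih]

theorem varsIn_bind (t : Tm S ar V) {σ : V → Tm S ar W} {A : Set W}
    (hσ : ∀ v, (σ v).VarsIn A) : (t.bind σ).VarsIn A := by
  induction t with
  | var v => exact hσ v
  | app _ _ ih => exact ih

/-- A term as a well-founded tree, with variables as leaves; this gives access to the
cardinality bounds for `WType`. -/
def toWType : Tm S ar V → WType fun a : V ⊕ S => Fin (Sum.elim (fun _ => 0) ar a)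
  | var v => ⟨.inl v, Fin.elim0⟩
  | app f ts => ⟨.inr f, fun i => (ts i).toWType⟩

theorem toWType_injective : Injective (toWType : Tm S ar V → _) := by
  intro s
  induction s with
  | var v =>
    rintro (w | ⟨g, us⟩) h
    · cases (WType.mk.inj h).1
      rfl
    · cases (WType.mk.inj h).1
  | app f ts ih =>
    rintro (w | ⟨g, us⟩) h
    · cases (WType.mk.inj h).1
    · obtain ⟨hfg, hargs⟩ := WType.mk.inj h
      cases hfg
      exact congrArg (app f) (funext fun i => ih i (congrFun (eq_of_heq hargs) i))

theorem mk_le_max : #(Tm S ar V) ≤ max #(V ⊕ S) ℵ₀ :=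
  (mk_le_of_injective toWType_injective).trans WType.cardinalMk_le_max_aleph0_of_finite

end Tm

section EquationalTheory

variable {F : Bool → Type} {arF : ∀ b, F b → ℕ}
variable {Ax : ∀ b, Set (Tm (F b) (arF b) ℕ × Tm (F b) (arF b) ℕ)}
variable {b : Bool} {g : F b} {V W : Type}

namespace AxCong

theorem bind {s t : Tm (F b) (arF b) V} (h : AxCong F arF Ax b s t)
    (σ : V → Tm (F b) (arF b) W) : AxCong F arF Ax b (s.bind σ) (t.bind σ) := by
  induction h with
  | refl t => exact .refl _
  | symm _ ih => exact .symm ih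
  | trans _ _ ih₁ ih₂ => exact .trans ih₁ ih₂
  | congr g ts us _ ih => exact .congr g _ _ ih
  | ax u v huv τ =>
    rw [Tm.bind_assoc, Tm.bind_assoc]
    exact .ax u v huv _

theorem bind_congr (t : Tm (F b) (arF b) V) {σ τ : V → Tm (F b) (arF b) W}
    (h : ∀ v, AxCong F arF Ax b (σ v) (τ v)) : AxCong F arF Ax b (t.bind σ) (t.bind τ) := by
  induction t with
  | var v => exact h v
  | app f ts ih => exact .congr f _ _ ih

end AxCong

variable (F arF Ax b) in
/-- `𝕋_b` is consistent: it does not identify two distinct variables. -/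
def Consistent : Prop := ¬ AxCong F arF Ax b (V := ℕ) (.var 0) (.var 1)

theorem consistent_of_not_isConst (hg : ¬ IsConst F arF Ax b g) : Consistent F arF Ax b := by
  intro h
  have hall := h.bind fun m =>
    if m = 0 then .app g fun j => .var j.val else (.var (arF b g) : Tm (F b) (arF b) ℕ)
  exact hg ⟨.var (arF b g), le_refl (arF b g), hall⟩

theorem Consistent.mem_range_of_axCong_var (hb : Consistent F arF Ax b)
    {p : Tm (F b) (arF b) V} {ι : V → W} {w : W}
    (h : AxCong F arF Ax b (p.bind fun v => .var (ι v)) (.var w)) : w ∈ Set.range ι := by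
  classical
  by_contra hw
  have hne : ∀ v, ι v ≠ w := fun v hv => hw ⟨v, hv⟩
  have hzero := h.bind fun _ => (.var 0 : Tm (F b) (arF b) ℕ)
  have hone := h.bind fun v => (.var (if v = w then 1 else 0) : Tm (F b) (arF b) ℕ)
  simp only [Tm.bind_assoc, Tm.bind, hne, if_false, if_true] at hzero hone
  exact hb (hzero.symm.trans hone)

theorem Consistent.eq_of_axCong_var (hb : Consistent F arF Ax b) {v w : V}
    (h : AxCong F arF Ax b (.var v) (.var w)) : v = w := by
  obtain ⟨_, hv⟩ :=
    hb.mem_range_of_axCong_var (p := .var ()) (ι := fun _ => v) h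
  exact hv

theorem isProj_of_axCong_var (hb : Consistent F arF Ax b) {a : Fin (arF b g) → V}
    (ha : Injective a) {v : V} (h : AxCong F arF Ax b (.app g fun i => .var (a i)) (.var v)) :
    IsProj F arF Ax b g := by
  obtain ⟨i, rfl⟩ := hb.mem_range_of_axCong_var (p := .app g .var) (ι := a) h
  have hstd := h.bind fun v => (.var (extend a Fin.val 0 v) : Tm (F b) (arF b) ℕ)
  simp only [Tm.bind, ha.extend_apply] at hstd
  exact ⟨i, hstd⟩

theorem isConst_of_axCong {a : Fin (arF b g) → W} (ha : Injective a) {p : Tm (F b) (arF b) V}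
    {ι : V → W} (hι : ∀ v, ι v ∉ Set.range a)
    (h : AxCong F arF Ax b (.app g fun i => .var (a i)) (p.bind fun v => .var (ι v))) :
    IsConst F arF Ax b g := by
  have hstd := h.bind fun w =>
    (.var (extend a Fin.val (fun _ => arF b g) w) : Tm (F b) (arF b) ℕ)
  simp only [Tm.bind, Tm.bind_assoc, ha.extend_apply] at hstd
  refine ⟨_, p.varsIn_bind fun v => ?_, hstd⟩
  rw [extend_apply' _ _ _ (hι v)]
  exact le_refl (arF b g)

variable (F arF Ax b V) in
/-- Provable equality in `𝕋_b`, as a setoid. -/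
def axSetoid : Setoid (Tm (F b) (arF b) V) := ⟨AxCong F arF Ax b, .refl, .symm, .trans⟩

variable (F arF Ax b V) in
/-- The free `𝕋_b`-algebra on `V`: terms modulo provable equality. -/
abbrev FreeAlg : Type := Quotient (axSetoid F arF Ax b V)

namespace FreeAlg

/-- The free generators of `FreeAlg F arF Ax b V`. -/
def var (v : V) : FreeAlg F arF Ax b V := Quotient.mk _ (.var v)

theorem var_injective (hb : Consistent F arF Ax b) :
    Injective (var : V → FreeAlg F arF Ax b V) :=
  fun _ _ h => hb.eq_of_axCong_var (Quotient.exact h)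

theorem mk_le [Infinite V] (hF : #(F b) ≤ #V) : #(FreeAlg F arF Ax b V) ≤ #V := by
  have hV : ℵ₀ ≤ #V := aleph0_le_mk V
  refine mk_quotient_le.trans (Tm.mk_le_max.trans (max_le ?_ hV))
  rw [mk_sum, lift_id, lift_id]
  exact add_le_of_le hV le_rfl hF

/-- Applying a symbol that is neither constant nor a projection to disjoint tuples of
generators, one for each element of `V`, yields pairwise distinct non-generators. -/
theorem mk_le_mk_compl_range_var [Infinite V] (hproj : ¬ IsProj F arF Ax b g)
    (hconst : ¬ IsConst F arF Ax b g) :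
    #V ≤ #((Set.range (var : V → FreeAlg F arF Ax b V))ᶜ : Set _) := by
  have hb := consistent_of_not_isConst hconst
  obtain ⟨pair⟩ : Nonempty (V × ℕ ≃ V) := by
    rw [← Cardinal.eq, mk_prod, lift_id, lift_id, mk_nat, mul_aleph0_eq (aleph0_le_mk V)]
  let tuple (v : V) (i : Fin (arF b g)) : V := pair (v, i)
  have tuple_inj (v : V) : Injective (tuple v) := fun i j h => by
    simpa [tuple, Fin.ext_iff] using h
  refine mk_le_of_injective
    (f := fun v => ⟨Quotient.mk _ (.app g fun i => .var (tuple v i)), ?_⟩) fun v w h => ?_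
  · rintro ⟨w, hw⟩
    exact hproj (isProj_of_axCong_var hb (tuple_inj v) (Quotient.exact hw.symm))
  · by_contra hvw
    refine hconst (isConst_of_axCong (tuple_inj v) (p := .app g .var) (ι := tuple w) ?_
      (Quotient.exact (Subtype.ext_iff.1 h)))
    rintro i ⟨j, hj⟩
    exact hvw (by simpa using congrArg Prod.fst (pair.injective hj))

theorem exists_equiv_extending_val {N : Type} {S : Set N} [Infinite S]
    (hS : #(Sᶜ : Set N) = #S) (hF : #(F b) ≤ #S) (hproj : ¬ IsProj F arF Ax b g)
    (hconst : ¬ IsConst F arF Ax b g) :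
    ∃ θ : FreeAlg F arF Ax b S ≃ N, ∀ v : S, θ (var v) = v := by
  classical
  have hinj := var_injective (V := S) (consistent_of_not_isConst hconst)
  obtain ⟨e⟩ : Nonempty (((Set.range (var : S → FreeAlg F arF Ax b S))ᶜ : Set _) ≃
      (Sᶜ : Set N)) := by
    rw [← Cardinal.eq, hS]
    exact ((mk_set_le _).trans (mk_le hF)).antisymm (mk_le_mk_compl_range_var hproj hconst)
  refine ⟨(Equiv.Set.sumCompl _).symm.trans
    (((Equiv.ofInjective _ hinj).symm.sumCongr e).trans (Equiv.Set.sumCompl S)), fun v => ?_⟩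
  rw [Equiv.trans_apply, Equiv.Set.sumCompl_symm_apply_of_mem (Set.mem_range_self v)]
  simp only [Equiv.trans_apply, Equiv.sumCongr_apply, Sum.map_inl, Equiv.Set.sumCompl_apply_inl]
  exact congrArg Subtype.val ((Equiv.ofInjective _ hinj).symm_apply_apply v)

end FreeAlg

theorem evalTm_bind {α : Type} (ops : ∀ b (g : F b), (Fin (arF b g) → α) → α) (ρ : W → α)
    (t : Tm (F b) (arF b) V) (σ : V → Tm (F b) (arF b) W) :
    evalTm F arF ops b ρ (t.bind σ) =
      evalTm F arF ops b (fun v => evalTm F arF ops b ρ (σ v)) t := by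
  induction t with
  | var v => rfl
  | app f ts ih => simp only [Tm.bind, evalTm, ih]

theorem AxCong.evalTm_eq (M : TModel F arF Ax) (ρ : V → M.carrier) {s t : Tm (F b) (arF b) V}
    (h : AxCong F arF Ax b s t) : evalTm F arF M.ops b ρ s = evalTm F arF M.ops b ρ t := by
  induction h with
  | refl t => rfl
  | symm _ ih => exact ih.symm
  | trans _ _ ih₁ ih₂ => exact ih₁.trans ih₂
  | congr g ts us _ ih => simp only [evalTm, ih]
  | ax u v huv τ =>
    rw [evalTm_bind, evalTm_bind]
    exact M.sat b u v huv _

end EquationalTheory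

section LayeredModels

variable {F : Bool → Type} {arF : ∀ b, F b → ℕ}
variable {Ax : ∀ b, Set (Tm (F b) (arF b) ℕ × Tm (F b) (arF b) ℕ)}
variable {X : Type}

variable (F arF Ax X) in
/-- A model of `𝕋₁ + 𝕋₂` with constants named by `X`, every other element of which has a root in
exactly one of the two theories, and whose `𝕋_b`-reduct is free on the elements without root
in `𝕋_b`. Elements not generated by the constants are allowed, so that a layered model can be
found by counting, without a normal form for terms. -/
structure LayeredModel extends TModel F arF Ax where
  const : X → carrier
  root : carrier → Option Bool
  const_injective : Injective const
  root_eq_none_iff : ∀ w, root w = none ↔ w ∈ Set.range const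
  axCong_of_evalTm_eq : ∀ b (p q : Tm (F b) (arF b) {w | root w ≠ some b}),
    evalTm F arF ops b Subtype.val p = evalTm F arF ops b Subtype.val q → AxCong F arF Ax b p q
  evalTm_surjective : ∀ b,
    Surjective (evalTm F arF ops b (Subtype.val : {w | root w ≠ some b} → carrier))

namespace LayeredModel

section Existence

variable {N : Type} {S : Bool → Set N} (θ : ∀ b, FreeAlg F arF Ax b (S b) ≃ N)

/-- The operations on `N` transported from the free algebras along the bijections `θ`. -/
noncomputable def transportOps (b : Bool) (g : F b) (a : Fin (arF b g) → N) : N :=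
  θ b (Quotient.mk _ (.app g fun i => ((θ b).symm (a i)).out))

theorem evalTm_transportOps (b : Bool) {V : Type} (ρ : V → N) (p : Tm (F b) (arF b) V) :
    evalTm F arF (transportOps θ) b ρ p =
      θ b (Quotient.mk _ (p.bind fun v => ((θ b).symm (ρ v)).out)) := by
  induction p with
  | var v => simp only [evalTm, Tm.bind, Quotient.out_eq, Equiv.apply_symm_apply]
  | app g ts ih =>
    refine congrArg (θ b) (Quotient.sound (.congr g _ _ fun i => ?_))
    refine Quotient.exact (s := axSetoid F arF Ax b (S b)) ?_
    simp only [ih, Equiv.symm_apply_apply, Quotient.out_eq]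

theorem evalTm_transportOps_val (hθ : ∀ b (v : S b), θ b (FreeAlg.var v) = v) (b : Bool)
    (p : Tm (F b) (arF b) (S b)) :
    evalTm F arF (transportOps θ) b Subtype.val p = θ b (Quotient.mk _ p) := by
  rw [evalTm_transportOps]
  refine congrArg (θ b) (Quotient.sound ?_)
  have hvar (v : S b) : AxCong F arF Ax b ((θ b).symm v).out (.var v) := by
    refine Quotient.exact (s := axSetoid F arF Ax b (S b)) ?_
    rw [Quotient.out_eq, Equiv.symm_apply_eq]
    exact (hθ b v).symm
  have hbind := AxCong.bind_congr p hvar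
  rwa [Tm.bind_var] at hbind

/-- The layered model on `N` obtained from bijections of `N` with the free algebras on the
elements without root in `𝕋_b`. -/
noncomputable def ofEquiv (const : X → N) (root : N → Option Bool)
    (const_injective : Injective const)
    (root_eq_none_iff : ∀ w, root w = none ↔ w ∈ Set.range const)
    (θ : ∀ b, FreeAlg F arF Ax b {w | root w ≠ some b} ≃ N)
    (hθ : ∀ b (v : {w | root w ≠ some b}), θ b (FreeAlg.var v) = v) :
    LayeredModel F arF Ax X where
  carrier := N
  ops := transportOps θ
  sat b u v huv ρ := by
    rw [evalTm_transportOps, evalTm_transportOps]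
    exact congrArg (θ b) (Quotient.sound (.ax u v huv _))
  const := const
  root := root
  const_injective := const_injective
  root_eq_none_iff := root_eq_none_iff
  axCong_of_evalTm_eq b p q h := by
    rw [evalTm_transportOps_val θ hθ, evalTm_transportOps_val θ hθ] at h
    exact Quotient.exact ((θ b).injective h)
  evalTm_surjective b w := by
    refine ⟨((θ b).symm w).out, ?_⟩
    rw [evalTm_transportOps_val θ hθ, Quotient.out_eq, Equiv.apply_symm_apply]

variable (X) in
/-- Each of the two sets of rooted elements is a copy of one infinite `K` that is large enough
for `𝕋_b`-terms over the other elements to be no more numerous than `K`. -/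
theorem nonempty_of_not_isProj_not_isConst
    (hyp : ∀ b, ∃ g : F b, ¬ IsProj F arF Ax b g ∧ ¬ IsConst F arF Ax b g) :
    Nonempty (LayeredModel F arF Ax X) := by
  let K := (Σ b, F b) ⊕ X ⊕ ℕ
  let N := X ⊕ Bool × K
  let root : N → Option Bool := Sum.elim (fun _ => none) fun k => some k.1
  have hK : ℵ₀ ≤ #K := aleph0_le_mk K
  have hN : #N ≤ #K := by
    have hX : #X ≤ #K := mk_le_of_injective (Sum.inr_injective.comp Sum.inl_injective)
    rw [mk_sum, mk_prod, lift_id, lift_id, lift_id, lift_id]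
    exact add_le_of_le hK hX (mul_le_of_le hK (mk_le_aleph0.trans hK) le_rfl)
  have copy_injective (b : Bool) : Injective fun k : K => (.inr (b, k) : N) :=
    Sum.inr_injective.comp (Prod.mk_right_injective b)
  have mk_eq {T : Set N} (b : Bool) (hT : ∀ k, (.inr (b, k) : N) ∈ T) : #T = #K :=
    ((mk_set_le T).trans hN).antisymm <|
      mk_le_of_injective ((copy_injective b).codRestrict hT)
  have mk_unrooted (b : Bool) : #{w : N | root w ≠ some b} = #K :=
    mk_eq (!b) fun _ h => Bool.not_ne_self b (Option.some.inj h)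
  have mk_rooted (b : Bool) : #({w : N | root w ≠ some b}ᶜ : Set N) = #K :=
    mk_eq b fun _ h => h rfl
  have exists_equiv (b : Bool) : ∃ θ : FreeAlg F arF Ax b {w | root w ≠ some b} ≃ N,
      ∀ v : {w | root w ≠ some b}, θ (FreeAlg.var v) = v := by
    obtain ⟨g, hproj, hconst⟩ := hyp b
    have : Infinite {w : N | root w ≠ some b} := by rwa [infinite_iff, mk_unrooted]
    refine FreeAlg.exists_equiv_extending_val ((mk_rooted b).trans (mk_unrooted b).symm) ?_
      hproj hconst
    rw [mk_unrooted]
    exact mk_le_of_injective (Sum.inl_injective.comp sigma_mk_injective)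
  choose θ hθ using exists_equiv
  exact ⟨ofEquiv .inl root Sum.inl_injective (by simp [root, N]) θ hθ⟩

end Existence

end LayeredModel

end LayeredModels

section ClosedTerms

variable {F : Bool → Type} {arF : ∀ b, F b → ℕ} {n : ℕ}
variable {Ax : ∀ b, Set (Tm (F b) (arF b) ℕ × Tm (F b) (arF b) ℕ)}

/-- The constants available in closed terms: the generators on the left and the indeterminates
on the right, so that `x` is `Sum.inr 0`. -/
abbrev Const (n : ℕ) : Type := Fin n ⊕ ℕ

/-- A constant as a closed term. -/
def Const.toTm : Const n → CT F arF n
  | .inl i => .app (.gen i) Fin.elim0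
  | .inr j => xTm F arF n j

/-- The value of a closed term in a model, given values for the constants. -/
def TModel.evalClosed (M : TModel F arF Ax) (ρ : Const n → M.carrier) : CT F arF n → M.carrier
  | .var v => v.elim
  | .app (.op b g) ts => M.ops b g fun i => M.evalClosed ρ (ts i)
  | .app (.gen i) _ => ρ (.inl i)
  | .app (.ind j) _ => ρ (.inr j)

namespace TModel

variable (M : TModel F arF Ax) (ρ : Const n → M.carrier)

theorem evalClosed_toTm (x : Const n) : M.evalClosed ρ x.toTm = ρ x := by
  cases x <;> rfl

theorem evalClosed_bind_embedOp {b : Bool} {V : Type} (p : Tm (F b) (arF b) V)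
    (σ : V → CT F arF n) :
    M.evalClosed ρ ((embedOp F arF n b p).bind σ) =
      evalTm F arF M.ops b (fun v => M.evalClosed ρ (σ v)) p := by
  induction p with
  | var v => rfl
  | app g ts ih => exact congrArg (M.ops b g) (funext ih)

theorem evalClosed_substInd (j : ℕ) (w t : CT F arF n) :
    M.evalClosed ρ (substInd F arF n j w t) =
      M.evalClosed (update ρ (.inr j) (M.evalClosed ρ w)) t := by
  induction t with
  | var v => exact v.elim
  | app f ts ih =>
    cases f with
    | op b g => exact congrArg (M.ops b g) (funext ih)
    | gen i => exact (update_of_ne Sum.inl_ne_inr _ _).symm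
    | ind j' =>
      by_cases hj : j' = j
      · subst hj
        simp only [substInd, evalClosed, if_true, update_self]
      · simp only [substInd, evalClosed, hj, if_false]
        exact (update_of_ne (Sum.inr_injective.ne hj) _ _).symm

theorem evalClosed_indToX (t : CT F arF n) :
    M.evalClosed ρ (indToX F arF n t) =
      M.evalClosed (Sum.elim (ρ ∘ .inl) fun _ => ρ (.inr 0)) t := by
  induction t with
  | var v => exact v.elim
  | app f ts ih =>
    cases f with
    | op b g => exact congrArg (M.ops b g) (funext ih)
    | gen i => rfl
    | ind j => rfl

end TModel

theorem PE.evalClosed_eq {B : Set Bool} {P : CSym F n → Prop} {s t : CT F arF n}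
    (h : PE F arF n Ax B P s t) (M : TModel F arF Ax) (ρ : Const n → M.carrier) :
    M.evalClosed ρ s = M.evalClosed ρ t := by
  induction h with
  | refl t => rfl
  | symm _ ih => exact ih.symm
  | trans _ _ ih₁ ih₂ => exact ih₁.trans ih₂
  | congr f ts us _ _ ih =>
    cases f with
    | op b g => exact congrArg (M.ops b g) (funext ih)
    | gen i => rfl
    | ind j => rfl
  | ax b _ u v huv σ =>
    rw [M.evalClosed_bind_embedOp, M.evalClosed_bind_embedOp]
    exact M.sat b u v huv _

theorem inSig_indToX (t : CT F arF n) :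
    InSig F arF n (SigP F n Set.univ {0}) (indToX F arF n t) := by
  induction t with
  | var v => exact v.elim
  | app f ts ih =>
    cases f with
    | op b g => exact ⟨trivial, ih⟩
    | gen i => exact ⟨trivial, ih⟩
    | ind j => exact ⟨rfl, fun i => i.elim0⟩

theorem indToX_eq_self {B : Set Bool} {t : CT F arF n} (ht : InSig F arF n (SigP F n B {0}) t) :
    indToX F arF n t = t := by
  induction t with
  | var v => exact v.elim
  | app f ts ih =>
    cases f with
    | op b g => exact congrArg (Tm.app (CSym.op b g)) (funext fun i => ih i (ht.2 i))
    | gen i => exact congrArg (Tm.app (CSym.gen i)) (funext fun i => i.elim0)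
    | ind j =>
      obtain rfl : j = 0 := ht.1
      exact congrArg (Tm.app (CSym.ind 0)) (funext fun i => i.elim0)

theorem indToX_bind_embedOp {b : Bool} {V : Type} (p : Tm (F b) (arF b) V)
    (σ : V → CT F arF n) :
    indToX F arF n ((embedOp F arF n b p).bind σ) =
      (embedOp F arF n b p).bind fun v => indToX F arF n (σ v) := by
  induction p with
  | var v => rfl
  | app g ts ih => exact congrArg (Tm.app (CSym.op b g)) (funext ih)

variable (F arF n Ax) in
/-- Provable equality in `𝕋₁ + 𝕋₂` after all indeterminates have been identified. -/
def peSetoid : Setoid (CT F arF n) where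
  r s t := PE F arF n Ax Set.univ (SigP F n Set.univ {0}) (indToX F arF n s) (indToX F arF n t)
  iseqv := ⟨fun t => .refl _ (inSig_indToX t), .symm, .trans⟩

/-- The operations on the set of closed terms modulo provable equality. -/
noncomputable def termOps (b : Bool) (g : F b)
    (a : Fin (arF b g) → Quotient (peSetoid F arF n Ax)) : Quotient (peSetoid F arF n Ax) :=
  Quotient.mk _ (.app (.op b g) fun i => (a i).out)

theorem termOps_mk (b : Bool) (g : F b) (ts : Fin (arF b g) → CT F arF n) :
    termOps b g (fun i => Quotient.mk (peSetoid F arF n Ax) (ts i)) =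
      Quotient.mk _ (.app (.op b g) ts) :=
  Quotient.sound (.congr (.op b g) _ _ trivial fun _ => Quotient.mk_out (s := peSetoid ..) _)

theorem evalTm_termOps {b : Bool} {V : Type} (ρ : V → Quotient (peSetoid F arF n Ax))
    (p : Tm (F b) (arF b) V) :
    evalTm F arF termOps b ρ p =
      Quotient.mk _ ((embedOp F arF n b p).bind fun v => (ρ v).out) := by
  induction p with
  | var v => exact (Quotient.out_eq _).symm
  | app g ts ih => exact (congrArg (termOps b g) (funext ih)).trans (termOps_mk b g _)

variable (F arF n Ax) in
/-- The model of `𝕋₁ + 𝕋₂` formed by closed terms modulo provable equality. -/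
noncomputable def termModel : TModel F arF Ax where
  carrier := Quotient (peSetoid F arF n Ax)
  ops := termOps
  sat b u v huv ρ := by
    rw [evalTm_termOps, evalTm_termOps]
    refine Quotient.sound (?_ : PE ..)
    rw [indToX_bind_embedOp, indToX_bind_embedOp]
    exact .ax b (Set.mem_univ b) u v huv _ fun _ => inSig_indToX _

theorem evalClosed_termModel (t : CT F arF n) :
    (termModel F arF n Ax).evalClosed (fun x => Quotient.mk _ x.toTm) t = Quotient.mk _ t := by
  induction t with
  | var v => exact v.elim
  | app f ts ih =>
    cases f with
    | op b g => exact (congrArg (termOps b g) (funext ih)).trans (termOps_mk b g ts)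
    | gen i =>
      exact congrArg (fun us => Quotient.mk _ (Tm.app (CSym.gen i) us)) (funext fun i => i.elim0)
    | ind j =>
      exact congrArg (fun us => Quotient.mk _ (Tm.app (CSym.ind j) us)) (funext fun i => i.elim0)

theorem pe_indToX_of_forall_evalClosed_eq {s t : CT F arF n}
    (h : ∀ (M : TModel F arF Ax) (ρ : Const n → M.carrier), M.evalClosed ρ s = M.evalClosed ρ t) :
    PE F arF n Ax Set.univ (SigP F n Set.univ {0}) (indToX F arF n s) (indToX F arF n t) := by
  have hst := h (termModel F arF n Ax) fun x => Quotient.mk _ x.toTm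
  rw [evalClosed_termModel, evalClosed_termModel] at hst
  exact Quotient.exact (s := peSetoid ..) hst

end ClosedTerms

section Height

variable {F : Bool → Type} {arF : ∀ b, F b → ℕ}
variable {Ax : ∀ b, Set (Tm (F b) (arF b) ℕ × Tm (F b) (arF b) ℕ)}
variable {X : Type}

namespace TModel

variable (M : TModel F arF Ax) {b : Bool} {E E' : Set M.carrier}

/-- The `𝕋_b`-subalgebra generated by `E`. -/
def span (b : Bool) (E : Set M.carrier) : Set M.carrier :=
  Set.range (evalTm F arF M.ops b (Subtype.val : E → M.carrier))

theorem subset_span : E ⊆ M.span b E := fun w hw => ⟨.var ⟨w, hw⟩, rfl⟩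

theorem evalTm_mem_span {V : Type} {ρ : V → M.carrier} (hρ : ∀ v, ρ v ∈ M.span b E)
    (p : Tm (F b) (arF b) V) : evalTm F arF M.ops b ρ p ∈ M.span b E := by
  choose q hq using hρ
  refine ⟨p.bind q, ?_⟩
  simp only [evalTm_bind, hq]

theorem span_mono (h : E ⊆ E') : M.span b E ⊆ M.span b E' := by
  rintro _ ⟨p, rfl⟩
  exact M.evalTm_mem_span (fun v => M.subset_span (h v.2)) p

end TModel

namespace LayeredModel

variable (D : LayeredModel F arF Ax X)

/-- The elements without root in `𝕋_b`, which generate the `𝕋_b`-reduct freely. -/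
abbrev aliens (b : Bool) : Set D.carrier := {w | D.root w ≠ some b}

/-- The elements of height at most `k`: those obtained from the constants by building at most `k`
alternating layers. -/
def heightLE : ℕ → Set D.carrier
  | 0 => {w | D.root w = none}
  | k + 1 => {w | ∀ c, D.root w = some c → w ∈ D.span c (heightLE k ∩ D.aliens c)}

theorem heightLE_mono : Monotone D.heightLE := by
  refine monotone_nat_of_le_succ fun k => ?_
  induction k with
  | zero =>
    intro w (hw : D.root w = none) c hc
    simp [hw] at hc
  | succ k ih =>
    intro w hw c hc
    exact D.span_mono (Set.inter_subset_inter_left _ ih) (hw c hc)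

theorem const_mem_heightLE (x : X) (k : ℕ) : D.const x ∈ D.heightLE k :=
  D.heightLE_mono (Nat.zero_le k) ((D.root_eq_none_iff _).2 ⟨x, rfl⟩)

theorem mem_span_of_mem_heightLE {k : ℕ} {w : D.carrier} (hw : w ∈ D.heightLE k) (c : Bool) :
    w ∈ D.span c (D.heightLE k ∩ D.aliens c) := by
  by_cases hc : D.root w = some c
  · cases k with
    | zero =>
      have hnone : D.root w = none := hw
      simp [hnone] at hc
    | succ k =>
      exact D.span_mono (Set.inter_subset_inter_left _ (D.heightLE_mono k.le_succ)) (hw c hc)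
  · exact D.subset_span ⟨hw, hc⟩

section Nontrivial

variable [Nontrivial X]

theorem consistent (D : LayeredModel F arF Ax X) (b : Bool) : Consistent F arF Ax b := by
  intro h
  obtain ⟨x, y, hxy⟩ := exists_pair_ne X
  have heval := h.evalTm_eq D.toTModel fun m => if m = 0 then D.const x else D.const y
  exact hxy (D.const_injective (by simpa [evalTm] using heval))

theorem mem_of_mem_span {b : Bool} {E : Set D.carrier} {w : D.carrier} (hE : E ⊆ D.aliens b)
    (hw : w ∈ D.aliens b) (h : w ∈ D.span b E) : w ∈ E := by
  obtain ⟨p, hp⟩ := h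
  let incl (v : E) : D.aliens b := ⟨v, hE v.2⟩
  have hcong := D.axCong_of_evalTm_eq b (p.bind fun v => .var (incl v)) (.var ⟨w, hw⟩)
    ((evalTm_bind _ _ _ _).trans hp)
  obtain ⟨v, hv⟩ := (D.consistent b).mem_range_of_axCong_var hcong
  obtain rfl : (v : D.carrier) = w := congrArg Subtype.val hv
  exact v.2

theorem span_subset_heightLE_succ (c : Bool) (k : ℕ) :
    D.span c (D.heightLE k ∩ D.aliens c) ⊆ D.heightLE (k + 1) := by
  intro w hw d hd
  by_cases hdc : d = c
  · rwa [hdc]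
  · have hwc : w ∈ D.aliens c := fun hc => hdc (Option.some.inj (hd.symm.trans hc))
    exact D.mem_span_of_mem_heightLE (D.mem_of_mem_span Set.inter_subset_right hwc hw).1 d

theorem ops_mem_heightLE_succ {b : Bool} {g : F b} {a : Fin (arF b g) → D.carrier} {k : ℕ}
    (ha : ∀ i, a i ∈ D.heightLE k) : D.ops b g a ∈ D.heightLE (k + 1) :=
  D.span_subset_heightLE_succ b k
    (D.evalTm_mem_span (fun i => D.mem_span_of_mem_heightLE (ha i) b) (.app g .var))

theorem root_ops_of_not_isProj {b : Bool} {g : F b} (hg : ¬ IsProj F arF Ax b g)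
    {a : Fin (arF b g) → D.carrier} (ha : Injective a) (halien : ∀ i, a i ∈ D.aliens b) :
    D.root (D.ops b g a) = some b := by
  by_contra hne
  have hcong := D.axCong_of_evalTm_eq b (.app g fun i => .var ⟨a i, halien i⟩)
    (.var ⟨D.ops b g a, hne⟩) rfl
  exact hg (isProj_of_axCong_var (D.consistent b)
    (fun i j hij => ha (congrArg Subtype.val hij)) hcong)

end Nontrivial

theorem ops_notMem_span_of_not_isConst {b : Bool} {g : F b} (hg : ¬ IsConst F arF Ax b g)
    {a : Fin (arF b g) → D.carrier} (ha : Injective a) (halien : ∀ i, a i ∈ D.aliens b)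
    {E : Set D.carrier} (hE : E ⊆ D.aliens b) (haE : ∀ i, a i ∉ E) :
    D.ops b g a ∉ D.span b E := by
  rintro ⟨p, hp⟩
  let incl (v : E) : D.aliens b := ⟨v, hE v.2⟩
  have hcong := D.axCong_of_evalTm_eq b (.app g fun i => .var ⟨a i, halien i⟩)
    (p.bind fun v => .var (incl v)) (by rw [evalTm_bind]; exact hp.symm)
  refine hg (isConst_of_axCong (fun i j hij => ha (congrArg Subtype.val hij)) ?_ hcong)
  rintro v ⟨i, hi⟩
  have hai : a i = v := congrArg Subtype.val hi
  exact haE i (hai ▸ v.2)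

theorem ops_notMem_heightLE_succ [Nontrivial X] {b : Bool} {g : F b} (hproj : ¬ IsProj F arF Ax b g)
    (hconst : ¬ IsConst F arF Ax b g) {a : Fin (arF b g) → D.carrier} (ha : Injective a)
    (halien : ∀ i, a i ∈ D.aliens b) {k : ℕ} (hk : ∀ i, a i ∉ D.heightLE k) :
    D.ops b g a ∉ D.heightLE (k + 1) := fun h =>
  D.ops_notMem_span_of_not_isConst hconst ha halien Set.inter_subset_right (fun i hi => hk i hi.1)
    (h b (D.root_ops_of_not_isProj hproj ha halien))

end LayeredModel

end Height

section Faithful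

variable {F : Bool → Type} {arF : ∀ b, F b → ℕ} {n : ℕ}
variable {Ax : ∀ b, Set (Tm (F b) (arF b) ℕ × Tm (F b) (arF b) ℕ)}

namespace LayeredModel

section Extension

variable {X : Type} (D : LayeredModel F arF Ax X) (M : TModel F arF Ax) {b : Bool}

/-- The `𝕋_b`-homomorphism `D → M` agreeing with `φ` on the elements without root in `𝕋_b`. -/
noncomputable def freeExt (b : Bool) (φ : D.carrier → M.carrier) (w : D.carrier) : M.carrier :=
  evalTm F arF M.ops b (fun v : D.aliens b => φ v) (surjInv (D.evalTm_surjective b) w)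

variable {φ : D.carrier → M.carrier}

theorem freeExt_evalTm (p : Tm (F b) (arF b) (D.aliens b)) :
    D.freeExt M b φ (evalTm F arF D.ops b Subtype.val p) =
      evalTm F arF M.ops b (fun v : D.aliens b => φ v) p :=
  (D.axCong_of_evalTm_eq b _ p (surjInv_eq _ _)).evalTm_eq M _

theorem freeExt_of_mem_aliens {w : D.carrier} (hw : w ∈ D.aliens b) :
    D.freeExt M b φ w = φ w :=
  D.freeExt_evalTm M (.var ⟨w, hw⟩)

theorem freeExt_ops {g : F b} (a : Fin (arF b g) → D.carrier) :
    D.freeExt M b φ (D.ops b g a) = M.ops b g fun i => D.freeExt M b φ (a i) := by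
  choose p hp using fun i => D.evalTm_surjective b (a i)
  obtain rfl := funext hp
  exact (D.freeExt_evalTm M (.app g p)).trans
    (congrArg (M.ops b g) (funext fun i => (D.freeExt_evalTm M (p i)).symm))

/-- The `k`-th approximation to the homomorphism `D → M` extending `φ₀` on the constants. There
may be no such homomorphism on elements not generated by the constants, but on the generated ones
the approximations stabilise. -/
noncomputable def stage (φ₀ : D.carrier → M.carrier) : ℕ → D.carrier → M.carrier
  | 0, w => φ₀ w
  | k + 1, w => (D.root w).elim (φ₀ w) fun b => D.freeExt M b (stage φ₀ k) w

variable {φ₀ : D.carrier → M.carrier}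

theorem stage_const (x : X) (k : ℕ) : D.stage M φ₀ k (D.const x) = φ₀ (D.const x) := by
  cases k with
  | zero => rfl
  | succ k => rw [stage, (D.root_eq_none_iff _).2 ⟨x, rfl⟩, Option.elim_none]

theorem stage_succ_of_root_eq {w : D.carrier} (hw : D.root w = some b) (k : ℕ) :
    D.stage M φ₀ (k + 1) w = D.freeExt M b (D.stage M φ₀ k) w := by
  rw [stage, hw, Option.elim_some]

theorem eventually_stage_eq_iff {w : D.carrier} {v : M.carrier} (b : Bool) :
    (∀ᶠ k in Filter.atTop, D.stage M φ₀ k w = v) ↔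
      ∀ᶠ k in Filter.atTop, D.freeExt M b (D.stage M φ₀ k) w = v := by
  by_cases hw : D.root w = some b
  · rw [← Filter.map_add_atTop_eq_nat 1, Filter.eventually_map]
    simp only [D.stage_succ_of_root_eq M hw, Filter.map_add_atTop_eq_nat]
  · simp only [D.freeExt_of_mem_aliens M hw]

end Extension

variable (D : LayeredModel F arF Ax (Const n)) (M : TModel F arF Ax)

theorem eventually_stage_evalClosed (φ₀ : D.carrier → M.carrier) (t : CT F arF n) :
    ∀ᶠ k in Filter.atTop,
      D.stage M φ₀ k (D.evalClosed D.const t) = M.evalClosed (φ₀ ∘ D.const) t := by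
  induction t with
  | var v => exact v.elim
  | app f ts ih =>
    cases f with
    | op b g =>
      have hargs := Filter.eventually_all.2 fun i => (D.eventually_stage_eq_iff M b).1 (ih i)
      refine (D.eventually_stage_eq_iff M b).2 (hargs.mono fun k hk => ?_)
      exact (D.freeExt_ops M _).trans (congrArg (M.ops b g) (funext hk))
    | gen i => exact .of_forall (D.stage_const M (.inl i))
    | ind j => exact .of_forall (D.stage_const M (.inr j))

theorem evalClosed_eq_of_evalClosed_const_eq (f : Const n → M.carrier) {s t : CT F arF n}
    (h : D.evalClosed D.const s = D.evalClosed D.const t) :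
    M.evalClosed f s = M.evalClosed f t := by
  let φ₀ := extend D.const f fun _ => f (.inr 0)
  have hφ₀ : φ₀ ∘ D.const = f := Function.extend_comp D.const_injective f _
  obtain ⟨k, hs, ht⟩ :=
    ((D.eventually_stage_evalClosed M φ₀ s).and (D.eventually_stage_evalClosed M φ₀ t)).exists
  rw [← hφ₀, ← hs, ← ht, h]

end LayeredModel

end Faithful

section Isotropy

variable {F : Bool → Type} {arF : ∀ b, F b → ℕ} {n : ℕ}
variable {Ax : ∀ b, Set (Tm (F b) (arF b) ℕ × Tm (F b) (arF b) ℕ)}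

namespace LayeredModel

variable (D : LayeredModel F arF Ax (Const n)) {f : Const n → D.carrier} {j k : ℕ}

theorem exists_evalClosed_const_mem_heightLE (t : CT F arF n) :
    ∃ k, D.evalClosed D.const t ∈ D.heightLE k := by
  induction t with
  | var v => exact v.elim
  | app h ts ih =>
    cases h with
    | op b g =>
      choose k hk using ih
      exact ⟨Finset.univ.sup k + 1, D.ops_mem_heightLE_succ fun i =>
        D.heightLE_mono (Finset.le_sup (Finset.mem_univ i)) (hk i)⟩
    | gen i => exact ⟨0, D.const_mem_heightLE (.inl i) 0⟩
    | ind j => exact ⟨0, D.const_mem_heightLE (.inr j) 0⟩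

theorem exists_evalClosed_mem_span {b : Bool} {E E' : Set D.carrier}
    (h : ∀ w ∈ E, ∃ t, D.evalClosed D.const t = w ∧ D.evalClosed f t ∈ D.span b E')
    {w : D.carrier} (hw : w ∈ D.span b E) :
    ∃ t, D.evalClosed D.const t = w ∧ D.evalClosed f t ∈ D.span b E' := by
  obtain ⟨p, rfl⟩ := hw
  choose t hconst hspan using fun v : E => h v v.2
  refine ⟨(embedOp F arF n b p).bind t, ?_, ?_⟩ <;> rw [D.evalClosed_bind_embedOp]
  · exact congrArg (evalTm F arF D.ops b · p) (funext hconst)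
  · exact D.evalTm_mem_span hspan p

theorem exists_evalClosed_mem_heightLE (hf : ∀ x, f x ∈ D.heightLE j) {w : D.carrier}
    (hw : w ∈ D.heightLE k) :
    ∃ t, D.evalClosed D.const t = w ∧ D.evalClosed f t ∈ D.heightLE (k + j) := by
  induction k generalizing w with
  | zero =>
    obtain ⟨x, rfl⟩ := (D.root_eq_none_iff w).1 hw
    refine ⟨x.toTm, D.evalClosed_toTm _ x, ?_⟩
    rw [D.evalClosed_toTm, Nat.zero_add]
    exact hf x
  | succ k ih =>
    cases hroot : D.root w with
    | none =>
      obtain ⟨x, rfl⟩ := (D.root_eq_none_iff w).1 hroot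
      refine ⟨x.toTm, D.evalClosed_toTm _ x, ?_⟩
      rw [D.evalClosed_toTm]
      exact D.heightLE_mono (Nat.le_add_left j (k + 1)) (hf x)
    | some c =>
      obtain ⟨t, rfl, ht⟩ := D.exists_evalClosed_mem_span (fun v hv =>
        (ih hv.1).imp fun t ht => ⟨ht.1, D.mem_span_of_mem_heightLE ht.2 c⟩) (hw c hroot)
      refine ⟨t, rfl, ?_⟩
      rw [Nat.add_right_comm]
      exact D.span_subset_heightLE_succ c (k + j) ht

theorem evalClosed_mem_heightLE (hf : ∀ x, f x ∈ D.heightLE j) {t : CT F arF n}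
    (ht : D.evalClosed D.const t ∈ D.heightLE k) : D.evalClosed f t ∈ D.heightLE (k + j) := by
  obtain ⟨s, hs, hmem⟩ := D.exists_evalClosed_mem_heightLE hf ht
  rwa [← D.evalClosed_eq_of_evalClosed_const_eq D.toTModel f hs]

theorem evalClosed_mem_span (hf : ∀ x, f x ∈ D.heightLE j) {t : CT F arF n} {b : Bool}
    (ht : D.evalClosed D.const t ∈ D.heightLE (k + 1))
    (hroot : D.root (D.evalClosed D.const t) = some b) :
    D.evalClosed f t ∈ D.span b (D.heightLE (k + j) ∩ D.aliens b) := by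
  obtain ⟨s, hs, hmem⟩ := D.exists_evalClosed_mem_span (fun v hv =>
    (D.exists_evalClosed_mem_heightLE hf hv.1).imp fun _ hs =>
      ⟨hs.1, D.mem_span_of_mem_heightLE hs.2 b⟩) (ht b hroot)
  rwa [← D.evalClosed_eq_of_evalClosed_const_eq D.toTModel f hs]

/-- The value of `t(w)`, the term `t` with `w` in place of `x`. -/
noncomputable def valueAt (t : CT F arF n) (w : D.carrier) : D.carrier :=
  D.evalClosed (update D.const (.inr 0) w) t

variable {t : CT F arF n}

theorem update_const_mem_heightLE {w : D.carrier} (hw : w ∈ D.heightLE j) (x : Const n) :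
    update D.const (.inr 0) w x ∈ D.heightLE j := by
  by_cases hx : x = .inr 0
  · rwa [hx, update_self]
  · rw [update_of_ne hx]
    exact D.const_mem_heightLE x j

theorem evalClosed_const_mem_heightLE_of_valueAt (ht : InSig F arF n (SigP F n Set.univ {0}) t)
    {i : ℕ} (h : D.valueAt t (D.const (.inr i)) ∈ D.heightLE k) :
    D.evalClosed D.const t ∈ D.heightLE k := by
  let collapse : Const n → D.carrier := Sum.elim (D.const ∘ .inl) fun _ => D.const (.inr 0)
  have hcollapse : ∀ x, collapse x ∈ D.heightLE 0 := by
    rintro (_ | _) <;> exact D.const_mem_heightLE _ 0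
  have hupdate : update collapse (.inr 0) (D.evalClosed collapse (xTm F arF n i)) = collapse :=
    update_eq_self (.inr 0) collapse
  have hsubst : D.evalClosed D.const (substInd F arF n 0 (xTm F arF n i) t) ∈ D.heightLE k := by
    rw [D.evalClosed_substInd]
    exact h
  have himage := D.evalClosed_mem_heightLE hcollapse hsubst
  rw [D.evalClosed_substInd, hupdate] at himage
  rwa [← indToX_eq_self ht, D.evalClosed_indToX]

theorem root_valueAt (ht : InSig F arF n (SigP F n Set.univ {0}) t) {b : Bool}
    (hroot : D.root (D.evalClosed D.const t) = some b)
    (hk : D.evalClosed D.const t ∈ D.heightLE (k + 1))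
    (hmin : D.evalClosed D.const t ∉ D.heightLE k) (i : ℕ) :
    D.root (D.valueAt t (D.const (.inr i))) = some b := by
  by_contra halien
  have hspan := D.evalClosed_mem_span
    (D.update_const_mem_heightLE (D.const_mem_heightLE (.inr i) 0)) hk hroot
  exact hmin (D.evalClosed_const_mem_heightLE_of_valueAt ht
    (D.mem_of_mem_span Set.inter_subset_right halien hspan).1)

theorem valueAt_injective (ht : GIso F arF n Ax Set.univ t) : Injective (D.valueAt t) := by
  obtain ⟨-, ⟨tinv, -, -, hinv⟩, -⟩ := ht
  have hleft (w : D.carrier) :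
      D.evalClosed (update D.const (.inr 0) (D.valueAt t w)) tinv = w := by
    have h := hinv.evalClosed_eq D.toTModel (update D.const (.inr 0) w)
    rw [D.evalClosed_substInd, update_idem] at h
    exact h.trans (update_self _ _ _)
  intro v w hvw
  rw [← hleft v, hvw, hleft w]

theorem valueAt_ops (ht : GIso F arF n Ax Set.univ t) (b : Bool) (g : F b) :
    D.valueAt t (D.ops b g fun i => D.const (.inr (i + 1))) =
      D.ops b g fun i => D.valueAt t (D.const (.inr (i + 1))) := by
  have h := (ht.2.2 b (Set.mem_univ b) g).evalClosed_eq D.toTModel D.const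
  rw [D.evalClosed_substInd] at h
  refine h.trans (congrArg (D.ops b g) (funext fun i => ?_))
  exact D.evalClosed_substInd D.const _ _ t

theorem evalClosed_const_mem_range_const
    (hyp : ∀ b, ∃ g : F b, ¬ IsProj F arF Ax b g ∧ ¬ IsConst F arF Ax b g)
    (ht : GIso F arF n Ax Set.univ t) : D.evalClosed D.const t ∈ Set.range D.const := by
  rw [← D.root_eq_none_iff]
  by_contra hne
  obtain ⟨b, hroot⟩ := Option.ne_none_iff_exists'.1 hne
  obtain ⟨k, hmin, hmem⟩ := Nat.exists_not_and_succ_of_not_zero_of_exists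
    (p := (D.evalClosed D.const t ∈ D.heightLE ·)) hne (D.exists_evalClosed_const_mem_heightLE t)
  obtain ⟨g, hproj, hconst⟩ := hyp !b
  let value (i : Fin (arF (!b) g)) : D.carrier := D.valueAt t (D.const (.inr (i + 1)))
  have hvalue_inj : Injective value := fun i i' h => by
    simpa [Fin.ext_iff] using D.const_injective (D.valueAt_injective ht h)
  have hvalue_alien (i) : value i ∈ D.aliens !b := by
    simp [value, D.root_valueAt ht.1 hroot hmem hmin]
  have hvalue_height (i) : value i ∉ D.heightLE k := fun h =>
    hmin (D.evalClosed_const_mem_heightLE_of_valueAt ht.1 h)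
  have hops_alien : D.ops (!b) g value ∈ D.aliens b := by
    simp [D.root_ops_of_not_isProj hproj hvalue_inj hvalue_alien]
  have hg : D.ops (!b) g (fun i => D.const (.inr (i + 1))) ∈ D.heightLE 1 :=
    D.ops_mem_heightLE_succ fun i => D.const_mem_heightLE (.inr (i + 1)) 0
  have hspan := D.evalClosed_mem_span (D.update_const_mem_heightLE hg) hmem hroot
  rw [← valueAt, D.valueAt_ops ht] at hspan
  exact D.ops_notMem_heightLE_succ hproj hconst hvalue_inj hvalue_alien hvalue_height
    (D.mem_of_mem_span Set.inter_subset_right hops_alien hspan).1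

theorem evalClosed_const_eq_of_mem_range (ht : GIso F arF n Ax Set.univ t)
    (h : D.evalClosed D.const t ∈ Set.range D.const) :
    D.evalClosed D.const t = D.const (.inr 0) := by
  obtain ⟨x, hx⟩ := h
  by_cases hx0 : x = .inr 0
  · rw [← hx, hx0]
  have hvalue (w : D.carrier) : D.valueAt t w = D.const x := by
    have heq := D.evalClosed_eq_of_evalClosed_const_eq D.toTModel (update D.const (.inr 0) w)
      (hx.symm.trans (D.evalClosed_toTm D.const x).symm)
    rwa [D.evalClosed_toTm, update_of_ne hx0] at heq
  have h01 := D.valueAt_injective ht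
    ((hvalue (D.const (.inr 0))).trans (hvalue (D.const (.inr 1))).symm)
  simpa using D.const_injective h01

theorem pe_of_evalClosed_const_eq {s : CT F arF n}
    (hs : InSig F arF n (SigP F n Set.univ {0}) s) (ht : InSig F arF n (SigP F n Set.univ {0}) t)
    (h : D.evalClosed D.const s = D.evalClosed D.const t) :
    PE F arF n Ax Set.univ (SigP F n Set.univ {0}) s t := by
  rw [← indToX_eq_self hs, ← indToX_eq_self ht]
  exact pe_indToX_of_forall_evalClosed_eq fun M f => D.evalClosed_eq_of_evalClosed_const_eq M f h

end LayeredModel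

theorem inSig_xTm {B : Set Bool} {J : Set ℕ} {j : ℕ} (hj : j ∈ J) :
    InSig F arF n (SigP F n B J) (xTm F arF n j) :=
  ⟨hj, fun i => i.elim0⟩

theorem substInd_xTm (j : ℕ) (w : CT F arF n) : substInd F arF n j w (xTm F arF n j) = w :=
  if_pos rfl

theorem gIso_xTm (B : Set Bool) : GIso F arF n Ax B (xTm F arF n 0) := by
  have hx : InSig F arF n (SigP F n B {0}) (xTm F arF n 0) := inSig_xTm rfl
  have hsubst : PE F arF n Ax B (SigP F n B {0})
      (substInd F arF n 0 (xTm F arF n 0) (xTm F arF n 0)) (xTm F arF n 0) := by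
    rw [substInd_xTm]
    exact .refl _ hx
  refine ⟨hx, ⟨xTm F arF n 0, hx, hsubst, hsubst⟩, fun b hb g => ?_⟩
  simp only [substInd_xTm]
  exact .refl _ ⟨hb, fun i => inSig_xTm ⟨Nat.le_add_left 1 i, i.isLt⟩⟩

end Isotropy

section Statement
variable (F : Bool → Type) (arF : ∀ b, F b → ℕ) (n : ℕ)
variable (Ax : ∀ b, Set (Tm (F b) (arF b) ℕ × Tm (F b) (arF b) ℕ))

/-- Main theorem: if each of the two theories (over disjoint signatures) has a
function symbol of positive arity that is neither constant nor a projection,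
then the logical isotropy group of the free model of `𝕋₁ + 𝕋₂` on `n`
generators is trivial: `G_{𝕋₁+𝕋₂}(Mₙ) = {[x]}`. -/
theorem isotropy_trivial
    (hyp : ∀ b, ∃ g : F b, 1 ≤ arF b g ∧ ¬ IsProj F arF Ax b g ∧ ¬ IsConst F arF Ax b g) :
    (∀ t : CT F arF n, GIso F arF n Ax Set.univ t →
      PE F arF n Ax Set.univ (SigP F n Set.univ {0}) t (xTm F arF n 0)) ∧
    GIso F arF n Ax Set.univ (xTm F arF n 0) := by
  have hsymb (b) : ∃ g : F b, ¬ IsProj F arF Ax b g ∧ ¬ IsConst F arF Ax b g :=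
    (hyp b).imp fun _ hg => hg.2
  obtain ⟨D⟩ := LayeredModel.nonempty_of_not_isProj_not_isConst (Const n) hsymb
  refine ⟨fun t ht => ?_, gIso_xTm Set.univ⟩
  have hrange := D.evalClosed_const_mem_range_const hsymb ht
  have hx := D.evalClosed_const_eq_of_mem_range ht hrange
  exact D.pe_of_evalClosed_const_eq ht.1 (inSig_xTm rfl) hx
end Statement
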